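/- arXiv:0906.3881 — 2 statements merged into one kernel-verified Lean document; each statement's English description precedes it below -/
import Mathlib

section
/- In type AIII, the intersection of the GL(V)-orbit of a semisimple element of p with p is a single K-orbit: if s, s′ ∈ p are semisimple and s′ = g s g⁻¹ for some g ∈ GL(V), then there exists k ∈ K with s′ = k s k⁻¹. -/
/-! In type AIII, the intersection of the `GL(V)`-orbit of a semisimple element of `p`
with `p` is a single `K`-orbit. -/

namespace SymmetricPairAIII

variable {𝕂 : Type*} [Field 𝕂] {N : ℕ}

/-- `gl(V)` for `V = 𝕂^N`. -/
abbrev EndV (𝕂 : Type*) [Field 𝕂] (N : ℕ) := Module.End 𝕂 (Fin N → 𝕂)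

/-- Semisimple = diagonalizable: the eigenspaces span `V`. -/
def IsSemisimpleE (x : EndV 𝕂 N) : Prop :=
  (⨆ c : 𝕂, LinearMap.ker (x - c • (1 : EndV 𝕂 N))) = ⊤

/-- `p = Hom(V_a, V_b) ⊕ Hom(V_b, V_a)`, the `(-1)`-eigenspace of the type AIII involution. -/
def pAIII (Va Vb : Submodule 𝕂 (Fin N → 𝕂)) : Set (EndV 𝕂 N) :=
  {x | Submodule.map x Va ≤ Vb ∧ Submodule.map x Vb ≤ Va}

/-- `K = {g ∈ GL(V) : g V_a = V_a, g V_b = V_b}`. -/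
def KAIII (Va Vb : Submodule 𝕂 (Fin N → 𝕂)) : Set (EndV 𝕂 N)ˣ :=
  {g | Submodule.map (g : EndV 𝕂 N) Va = Va ∧ Submodule.map (g : EndV 𝕂 N) Vb = Vb}

/-- The conjugation action `g.z = g z g⁻¹` of `GL(V)` on `gl(V)`. -/
def conjAct (g : (EndV 𝕂 N)ˣ) (z : EndV 𝕂 N) : EndV 𝕂 N :=
  (g : EndV 𝕂 N) * z * ((g⁻¹ : (EndV 𝕂 N)ˣ) : EndV 𝕂 N)

end SymmetricPairAIII

open SymmetricPairAIII

/-!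
Write an element of `p` in blocks `X : V_a → V_b` and `Y : V_b → V_a`; its square then has diagonal
blocks `YX` and `XY`. For `μ ≠ 0` the map `X` identifies the `μ`-eigenspaces of `YX` and `XY`, while
for `μ = 0` these eigenspaces are `ker X` and `ker Y`, whose dimensions differ by
`dim V_a - dim V_b` because `X` and `Y` have equal rank. In both cases the sum of the two dimensions
is that of the `μ`-eigenspace of the square, a conjugation invariant, so a conjugate element of `p`
with blocks `X'`, `Y'` has the same eigenspace dimensions on each side. Hence some `u` in `GL(V_a)`
conjugates `YX` to `Y'X'`. The matching `w` in `GL(V_b)` is glued from `μ⁻¹X'uY` on the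
`μ`-eigenspace of `XY` for `μ ≠ 0` and any isomorphism `ker Y ≃ ker Y'` for `μ = 0`; then
`k = u ⊕ w` conjugates one element to the other.
-/

namespace SymmetricPairAIII

open Module

lemma exists_injective_of_isInternal {R ι M N : Type*} [Ring R] [DecidableEq ι]
    [AddCommGroup M] [Module R M] [AddCommGroup N] [Module R N]
    {A : ι → Submodule R M} {B : ι → Submodule R N}
    (hA : DirectSum.IsInternal A) (hB : iSupIndep B)
    (φ : ∀ i, A i →ₗ[R] B i) (hφ : ∀ i, Function.Injective (φ i)) :
    ∃ ψ : M →ₗ[R] N, Function.Injective ψ ∧ ∀ i (a : A i), ψ a = φ i a := by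
  let decomp := LinearEquiv.ofBijective (DirectSum.coeLinearMap A) hA
  refine ⟨DirectSum.coeLinearMap B ∘ₗ DirectSum.lmap φ ∘ₗ decomp.symm.toLinearMap,
    hB.dfinsupp_lsum_injective.comp
      (((DirectSum.lmap_injective φ).mpr hφ).comp decomp.symm.injective), fun i a => ?_⟩
  have symm_apply : decomp.symm a = DirectSum.lof R ι (fun i => A i) i a := by
    rw [LinearEquiv.symm_apply_eq]
    exact (DirectSum.coeLinearMap_lof A i a).symm
  simp [symm_apply]

section Semiconj

variable {R M N : Type*} [CommRing R] [AddCommGroup M] [Module R M] [AddCommGroup N] [Module R N]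

/-- An endomorphism is diagonalizable if its eigenspaces span; unlike `IsSemisimpleE`, this makes
sense on any module, in particular on `V_a` and `V_b` separately. -/
def IsDiagonalizable (f : End R M) : Prop :=
  ⨆ μ, f.eigenspace μ = ⊤

lemma mapsTo_eigenspace_of_semiconj {φ : M →ₗ[R] N} {f : End R M} {f' : End R N}
    (h : Function.Semiconj φ f f') (μ : R) :
    Set.MapsTo φ (f.eigenspace μ) (f'.eigenspace μ) := by
  intro v hv
  rw [SetLike.mem_coe, End.mem_eigenspace_iff] at hv ⊢
  rw [← h v, hv, map_smul]

lemma map_eigenspace_of_semiconj {e : M ≃ₗ[R] N} {f : End R M} {f' : End R N}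
    (h : Function.Semiconj e f f') (μ : R) :
    (f.eigenspace μ).map e.toLinearMap = f'.eigenspace μ := by
  have h_symm : Function.Semiconj e.symm f' f := h.inverse_left e.left_inv e.right_inv
  refine le_antisymm
    (Submodule.map_le_iff_le_comap.mpr (mapsTo_eigenspace_of_semiconj (φ := e.toLinearMap) h μ)) ?_
  rw [Submodule.map_equiv_eq_comap_symm]
  exact mapsTo_eigenspace_of_semiconj (φ := e.symm.toLinearMap) h_symm μ

lemma finrank_eigenspace_eq_of_semiconj {e : M ≃ₗ[R] N} {f : End R M} {f' : End R N}
    (h : Function.Semiconj e f f') (μ : R) :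
    finrank R (f.eigenspace μ) = finrank R (f'.eigenspace μ) := by
  rw [← map_eigenspace_of_semiconj h μ, LinearEquiv.finrank_map_eq]

lemma IsDiagonalizable.of_semiconj {φ : M →ₗ[R] N} {f : End R M} {f' : End R N}
    (hf : IsDiagonalizable f) (h : Function.Semiconj φ f f') (hφ : Function.Surjective φ) :
    IsDiagonalizable f' := by
  rw [IsDiagonalizable, eq_top_iff, ← LinearMap.range_eq_top.mpr hφ, LinearMap.range_eq_map, ← hf,
    Submodule.map_iSup]
  exact iSup_mono fun μ => Submodule.map_le_iff_le_comap.mpr (mapsTo_eigenspace_of_semiconj h μ)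

lemma IsDiagonalizable.mul_self {f : End R M} (hf : IsDiagonalizable f) :
    IsDiagonalizable (f * f) := by
  rw [IsDiagonalizable, eq_top_iff, ← hf]
  refine iSup_le fun μ v hv => Submodule.mem_iSup_of_mem (μ * μ) ?_
  rw [End.mem_eigenspace_iff] at hv ⊢
  rw [End.mul_apply, hv, map_smul, hv, smul_smul]

lemma IsDiagonalizable.ext_on_eigenspaces {f : End R M} (hf : IsDiagonalizable f)
    {φ ψ : M →ₗ[R] N} (h : ∀ μ, ∀ v ∈ f.eigenspace μ, φ v = ψ v) : φ = ψ := by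
  rw [← LinearMap.eqLocus_eq_top, eq_top_iff, ← hf]
  exact iSup_le h

lemma disjoint_ker_range_of_semiconj {e : M ≃ₗ[R] N} {f : End R M} {f' : End R N}
    (h : Function.Semiconj e f f') (hf : Disjoint (LinearMap.ker f) (LinearMap.range f)) :
    Disjoint (LinearMap.ker f') (LinearMap.range f') := by
  rw [Submodule.disjoint_def] at hf ⊢
  rintro _ hker ⟨y, rfl⟩
  obtain ⟨v, rfl⟩ := e.surjective y
  rw [LinearMap.mem_ker, ← h, ← h, e.map_eq_zero_iff] at hker
  rw [← h, hf (f v) hker ⟨v, rfl⟩, map_zero]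

end Semiconj

section OffDiag

variable {R A B : Type*} [CommRing R] [AddCommGroup A] [Module R A] [AddCommGroup B] [Module R B]

/-- The endomorphism of `A × B` with zero diagonal blocks and off-diagonal blocks `X` and `Y`: the
elements of `p`, once `V` is identified with `V_a × V_b`. -/
def offDiag (X : A →ₗ[R] B) (Y : B →ₗ[R] A) : End R (A × B) :=
  (Y ∘ₗ LinearMap.snd R A B).prod (X ∘ₗ LinearMap.fst R A B)

@[simp]
lemma offDiag_apply (X : A →ₗ[R] B) (Y : B →ₗ[R] A) (v : A × B) :
    offDiag X Y v = (Y v.2, X v.1) :=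
  rfl

lemma disjoint_ker_range_of_offDiag {X : A →ₗ[R] B} {Y : B →ₗ[R] A}
    (h : Disjoint (LinearMap.ker (offDiag X Y)) (LinearMap.range (offDiag X Y))) :
    Disjoint (LinearMap.ker Y) (LinearMap.range X) ∧
      Disjoint (LinearMap.ker X) (LinearMap.range Y) := by
  rw [Submodule.disjoint_def] at h
  constructor <;> rw [Submodule.disjoint_def]
  · rintro _ hYXa ⟨a, rfl⟩
    exact congrArg Prod.snd (h (0, X a) (by simpa using hYXa) ⟨(a, 0), by simp⟩)
  · rintro _ hXYb ⟨b, rfl⟩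
    exact congrArg Prod.fst (h (Y b, 0) (by simpa using hXYb) ⟨(0, b), by simp⟩)

lemma isDiagonalizable_comp_of_offDiag_sq {X : A →ₗ[R] B} {Y : B →ₗ[R] A}
    (h : IsDiagonalizable (offDiag X Y * offDiag X Y)) :
    IsDiagonalizable (Y ∘ₗ X) ∧ IsDiagonalizable (X ∘ₗ Y) :=
  ⟨h.of_semiconj (φ := LinearMap.fst R A B) (fun _ => rfl) Prod.fst_surjective,
    h.of_semiconj (φ := LinearMap.snd R A B) (fun _ => rfl) Prod.snd_surjective⟩

lemma eigenspace_offDiag_sq (X : A →ₗ[R] B) (Y : B →ₗ[R] A) (μ : R) :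
    (offDiag X Y * offDiag X Y).eigenspace μ =
      (End.eigenspace (Y ∘ₗ X) μ).prod (End.eigenspace (X ∘ₗ Y) μ) := by
  ext v
  simp [Prod.ext_iff]

lemma apply_eq_zero_of_disjoint_ker_range {X : A →ₗ[R] B} {Y : B →ₗ[R] A}
    (h : Disjoint (LinearMap.ker Y) (LinearMap.range X)) {a : A} (ha : Y (X a) = 0) : X a = 0 :=
  Submodule.disjoint_def.mp h (X a) ha ⟨a, rfl⟩

lemma eigenspace_comp_zero {X : A →ₗ[R] B} {Y : B →ₗ[R] A}
    (h : Disjoint (LinearMap.ker Y) (LinearMap.range X)) :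
    End.eigenspace (Y ∘ₗ X) 0 = LinearMap.ker X := by
  rw [End.eigenspace_zero]
  exact le_antisymm (fun a ha => apply_eq_zero_of_disjoint_ker_range h ha)
    (LinearMap.ker_le_ker_comp X Y)

end OffDiag

section Decomposition

variable {R M : Type*} [CommRing R] [AddCommGroup M] [Module R M]

lemma semiconj_prodEquivOfIsCompl_offDiag {P Q : Submodule R M} (hPQ : IsCompl P Q) {s : End R M}
    (ha : ∀ v ∈ P, s v ∈ Q) (hb : ∀ v ∈ Q, s v ∈ P) :
    Function.Semiconj (P.prodEquivOfIsCompl Q hPQ) (offDiag (s.restrict ha) (s.restrict hb)) s :=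
  fun v => by simp [add_comm]

lemma submodule_map_eq_self_of_apply_eq {p : Submodule R M} {f : End R M} {u : p ≃ₗ[R] p}
    (h : ∀ v : p, f v = u v) : p.map f = p := by
  have comp_eq : f ∘ₗ p.subtype = p.subtype ∘ₗ u.toLinearMap := LinearMap.ext h
  calc p.map f = LinearMap.range (f ∘ₗ p.subtype) := by
        rw [LinearMap.range_comp, Submodule.range_subtype]
    _ = p := by rw [comp_eq, LinearMap.range_comp_of_range_eq_top _ u.range, p.range_subtype]

end Decomposition

section Eigenspaces

variable {𝕂 V W : Type*} [Field 𝕂] [AddCommGroup V] [Module 𝕂 V] [AddCommGroup W] [Module 𝕂 W]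

lemma isSemisimpleE_iff_isDiagonalizable {N : ℕ} {x : EndV 𝕂 N} :
    IsSemisimpleE x ↔ IsDiagonalizable x := by
  simp only [IsSemisimpleE, IsDiagonalizable, End.eigenspace_def]

lemma IsDiagonalizable.disjoint_ker_range {f : End 𝕂 V} (hf : IsDiagonalizable f) :
    Disjoint (LinearMap.ker f) (LinearMap.range f) := by
  rw [← End.eigenspace_zero]
  refine (f.eigenspaces_iSupIndep 0).mono_right ?_
  rw [LinearMap.range_eq_map, ← hf, Submodule.map_iSup]
  refine iSup_le fun μ => ?_
  rintro _ ⟨v, hv, rfl⟩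
  rw [SetLike.mem_coe, End.mem_eigenspace_iff] at hv
  rcases eq_or_ne μ 0 with rfl | hμ
  · simp [hv]
  · rw [hv]
    exact Submodule.smul_mem _ μ
      (Submodule.mem_iSup_of_mem μ (Submodule.mem_iSup_of_mem hμ (End.mem_eigenspace_iff.mpr hv)))

lemma finrank_eigenspace_le_of_semiconj [FiniteDimensional 𝕂 W] {φ : V →ₗ[𝕂] W} {f : End 𝕂 V}
    {f' : End 𝕂 W} (h : Function.Semiconj φ f f') {μ : 𝕂}
    (hφ : Disjoint (f.eigenspace μ) (LinearMap.ker φ)) :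
    finrank 𝕂 (f.eigenspace μ) ≤ finrank 𝕂 (f'.eigenspace μ) :=
  LinearMap.finrank_le_finrank_of_injective (f := φ.restrict (mapsTo_eigenspace_of_semiconj h μ))
    ((LinearMap.injective_restrict_iff _).mpr hφ)

lemma IsDiagonalizable.exists_linearEquiv_of_eigenspace [FiniteDimensional 𝕂 V]
    {f f' : End 𝕂 V} (hf : IsDiagonalizable f)
    (φ : ∀ μ, f.eigenspace μ →ₗ[𝕂] f'.eigenspace μ) (hφ : ∀ μ, Function.Injective (φ μ)) :
    ∃ e : V ≃ₗ[𝕂] V, Function.Semiconj e f f' ∧ ∀ μ (v : f.eigenspace μ), e v = φ μ v := by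
  classical
  obtain ⟨ψ, hψ, hψφ⟩ := exists_injective_of_isInternal
    (DirectSum.isInternal_submodule_of_iSupIndep_of_iSup_eq_top f.eigenspaces_iSupIndep hf)
    f'.eigenspaces_iSupIndep φ hφ
  have semiconj : ψ ∘ₗ f = f' ∘ₗ ψ := hf.ext_on_eigenspaces fun μ v hv => by
    have hψv : ψ v ∈ f'.eigenspace μ := hψφ μ ⟨v, hv⟩ ▸ (φ μ ⟨v, hv⟩).2
    rw [LinearMap.comp_apply, LinearMap.comp_apply, End.mem_eigenspace_iff.mp hψv,
      End.mem_eigenspace_iff.mp hv, map_smul]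
  exact ⟨LinearEquiv.ofInjectiveEndo ψ hψ, LinearMap.congr_fun semiconj, hψφ⟩

lemma IsDiagonalizable.exists_semiconj_of_finrank_eigenspace_eq [FiniteDimensional 𝕂 V]
    {f f' : End 𝕂 V} (hf : IsDiagonalizable f)
    (h : ∀ μ, finrank 𝕂 (f.eigenspace μ) = finrank 𝕂 (f'.eigenspace μ)) :
    ∃ e : V ≃ₗ[𝕂] V, Function.Semiconj e f f' := by
  obtain ⟨e, he, -⟩ := hf.exists_linearEquiv_of_eigenspace
    (fun μ => (LinearEquiv.ofFinrankEq _ _ (h μ)).toLinearMap)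
    (fun μ => LinearEquiv.injective _)
  exact ⟨e, he⟩

end Eigenspaces

section Pairs

variable {𝕂 A B : Type*} [Field 𝕂] [AddCommGroup A] [Module 𝕂 A] [AddCommGroup B] [Module 𝕂 B]

lemma finrank_eigenspace_comp_le [FiniteDimensional 𝕂 B] (X : A →ₗ[𝕂] B) (Y : B →ₗ[𝕂] A)
    {μ : 𝕂} (hμ : μ ≠ 0) :
    finrank 𝕂 (End.eigenspace (Y ∘ₗ X) μ) ≤ finrank 𝕂 (End.eigenspace (X ∘ₗ Y) μ) := by
  refine finrank_eigenspace_le_of_semiconj (φ := X) (fun _ => rfl) ?_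
  refine Submodule.disjoint_def.mpr fun a ha hXa => ?_
  rw [End.mem_eigenspace_iff, LinearMap.comp_apply, LinearMap.mem_ker.mp hXa, map_zero] at ha
  exact (smul_eq_zero.mp ha.symm).resolve_left hμ

lemma finrank_eigenspace_comp_comm [FiniteDimensional 𝕂 A] [FiniteDimensional 𝕂 B]
    (X : A →ₗ[𝕂] B) (Y : B →ₗ[𝕂] A) {μ : 𝕂} (hμ : μ ≠ 0) :
    finrank 𝕂 (End.eigenspace (Y ∘ₗ X) μ) = finrank 𝕂 (End.eigenspace (X ∘ₗ Y) μ) :=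
  (finrank_eigenspace_comp_le X Y hμ).antisymm (finrank_eigenspace_comp_le Y X hμ)

lemma finrank_range_le_of_disjoint [FiniteDimensional 𝕂 A] {X : A →ₗ[𝕂] B}
    {Y : B →ₗ[𝕂] A} (h : Disjoint (LinearMap.ker Y) (LinearMap.range X)) :
    finrank 𝕂 (LinearMap.range X) ≤ finrank 𝕂 (LinearMap.range Y) :=
  LinearMap.finrank_le_finrank_of_injective
    (f := Y.restrict fun b (_ : b ∈ LinearMap.range X) => LinearMap.mem_range_self Y b)
    ((LinearMap.injective_restrict_iff _).mpr h.symm)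

lemma finrank_eigenspace_comp_zero_add [FiniteDimensional 𝕂 A] [FiniteDimensional 𝕂 B]
    {X : A →ₗ[𝕂] B} {Y : B →ₗ[𝕂] A}
    (hYX : Disjoint (LinearMap.ker Y) (LinearMap.range X))
    (hXY : Disjoint (LinearMap.ker X) (LinearMap.range Y)) :
    finrank 𝕂 (End.eigenspace (Y ∘ₗ X) 0) + finrank 𝕂 B =
      finrank 𝕂 (End.eigenspace (X ∘ₗ Y) 0) + finrank 𝕂 A := by
  have rank_eq := (finrank_range_le_of_disjoint hYX).antisymm (finrank_range_le_of_disjoint hXY)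
  have rank_nullity_X := X.finrank_range_add_finrank_ker
  have rank_nullity_Y := Y.finrank_range_add_finrank_ker
  rw [eigenspace_comp_zero hYX, eigenspace_comp_zero hXY]
  omega

lemma exists_injective_eigenspace_comp [FiniteDimensional 𝕂 B] {X X' : A →ₗ[𝕂] B}
    {Y Y' : B →ₗ[𝕂] A} {u : A ≃ₗ[𝕂] A} (hu : Function.Semiconj u (Y ∘ₗ X) (Y' ∘ₗ X'))
    (hdim : finrank 𝕂 (End.eigenspace (X ∘ₗ Y) 0) = finrank 𝕂 (End.eigenspace (X' ∘ₗ Y') 0))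
    (μ : 𝕂) :
    ∃ φ : End.eigenspace (X ∘ₗ Y) μ →ₗ[𝕂] End.eigenspace (X' ∘ₗ Y') μ,
      Function.Injective φ ∧
        (μ ≠ 0 → ∀ b : End.eigenspace (X ∘ₗ Y) μ, μ • (φ b : B) = X' (u (Y b))) := by
  rcases eq_or_ne μ 0 with rfl | hμ
  · exact ⟨(LinearEquiv.ofFinrankEq _ _ hdim).toLinearMap, LinearEquiv.injective _,
      fun h => (h rfl).elim⟩
  let ψ : B →ₗ[𝕂] B := μ⁻¹ • X' ∘ₗ u.toLinearMap ∘ₗ Y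
  have hψ : Function.Semiconj ψ (X ∘ₗ Y) (X' ∘ₗ Y') :=
    fun b => by simpa [ψ] using congrArg (μ⁻¹ • X' ·) (hu (Y b))
  refine ⟨ψ.restrict (mapsTo_eigenspace_of_semiconj hψ μ),
    (LinearMap.injective_restrict_iff _).mpr ?_, fun _ b => ?_⟩
  · refine Submodule.disjoint_def.mpr fun b hb hb0 => ?_
    have hXuY : X' (u (Y b)) = 0 := by simpa [ψ, hμ] using hb0
    have hYXY : u (Y (X (Y b))) = 0 := (hu (Y b)).trans (by simp [hXuY])
    rw [End.mem_eigenspace_iff, LinearMap.comp_apply] at hb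
    have hYb : Y b = 0 := by simpa [hb, hμ] using hYXY
    simpa [hYb, hμ] using hb.symm
  · exact smul_inv_smul₀ hμ (X' (u (Y b)))

theorem exists_linearEquiv_pair_of_finrank_eigenspace_eq [FiniteDimensional 𝕂 A]
    [FiniteDimensional 𝕂 B] {X X' : A →ₗ[𝕂] B} {Y Y' : B →ₗ[𝕂] A}
    (hdiagA : IsDiagonalizable (Y ∘ₗ X)) (hdiagB : IsDiagonalizable (X ∘ₗ Y))
    (hYX : Disjoint (LinearMap.ker Y) (LinearMap.range X))
    (hXY : Disjoint (LinearMap.ker X) (LinearMap.range Y))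
    (hYX' : Disjoint (LinearMap.ker Y') (LinearMap.range X'))
    (hXY' : Disjoint (LinearMap.ker X') (LinearMap.range Y'))
    (hdimA : ∀ μ,
      finrank 𝕂 (End.eigenspace (Y ∘ₗ X) μ) = finrank 𝕂 (End.eigenspace (Y' ∘ₗ X') μ))
    (hdimB : finrank 𝕂 (End.eigenspace (X ∘ₗ Y) 0) = finrank 𝕂 (End.eigenspace (X' ∘ₗ Y') 0)) :
    ∃ (u : A ≃ₗ[𝕂] A) (w : B ≃ₗ[𝕂] B),
      (∀ a, w (X a) = X' (u a)) ∧ ∀ b, u (Y b) = Y' (w b) := by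
  obtain ⟨u, hu⟩ := hdiagA.exists_semiconj_of_finrank_eigenspace_eq hdimA
  choose φ hφ hφu using exists_injective_eigenspace_comp hu hdimB
  obtain ⟨w, hw, hwφ⟩ := hdiagB.exists_linearEquiv_of_eigenspace φ hφ
  have hwu : ∀ μ ≠ 0, ∀ b ∈ End.eigenspace (X ∘ₗ Y) μ, μ • w b = X' (u (Y b)) :=
    fun μ hμ b hb => by rw [← hφu μ hμ ⟨b, hb⟩, ← hwφ]
  refine ⟨u, w, LinearMap.congr_fun (f := w.toLinearMap ∘ₗ X) (g := X' ∘ₗ u.toLinearMap) ?_,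
    LinearMap.congr_fun (f := u.toLinearMap ∘ₗ Y) (g := Y' ∘ₗ w.toLinearMap) ?_⟩
  · refine hdiagA.ext_on_eigenspaces fun μ a ha => ?_
    have hYXa : Y (X a) = μ • a := End.mem_eigenspace_iff.mp ha
    rcases eq_or_ne μ 0 with rfl | hμ
    · have hXa : X a = 0 := apply_eq_zero_of_disjoint_ker_range hYX (by simpa using hYXa)
      have hXua : X' (u a) = 0 :=
        apply_eq_zero_of_disjoint_ker_range hYX' ((hu a).symm.trans (by simp [hXa]))
      simp [hXa, hXua]
    · refine smul_right_injective B hμ ((hwu μ hμ (X a) ?_).trans (by simp [hYXa]))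
      exact mapsTo_eigenspace_of_semiconj (φ := X) (fun _ => rfl) μ ha
  · refine hdiagB.ext_on_eigenspaces fun μ b hb => ?_
    have hXYb : X (Y b) = μ • b := End.mem_eigenspace_iff.mp hb
    rcases eq_or_ne μ 0 with rfl | hμ
    · have hYb : Y b = 0 := apply_eq_zero_of_disjoint_ker_range hXY (by simpa using hXYb)
      have hYwb : Y' (w b) = 0 :=
        apply_eq_zero_of_disjoint_ker_range hXY' ((hw b).symm.trans (by simp [hYb]))
      simp [hYb, hYwb]
    · refine smul_right_injective A hμ ?_
      calc μ • u (Y b) = u (Y (X (Y b))) := by simp [hXYb]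
        _ = Y' (X' (u (Y b))) := hu (Y b)
        _ = μ • Y' (w b) := by rw [← hwu μ hμ b hb, map_smul]

lemma finrank_submodule_prod [FiniteDimensional 𝕂 A] [FiniteDimensional 𝕂 B]
    (p : Submodule 𝕂 A) (q : Submodule 𝕂 B) :
    finrank 𝕂 (p.prod q) = finrank 𝕂 p + finrank 𝕂 q := by
  have range_eq : LinearMap.range (p.subtype.prodMap q.subtype) = p.prod q := by
    ext v
    simp
  rw [← finrank_prod, ← range_eq]
  exact LinearMap.finrank_range_of_inj (p.subtype_injective.prodMap q.subtype_injective)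

lemma finrank_eigenspace_offDiag_sq [FiniteDimensional 𝕂 A] [FiniteDimensional 𝕂 B]
    (X : A →ₗ[𝕂] B) (Y : B →ₗ[𝕂] A) (μ : 𝕂) :
    finrank 𝕂 ((offDiag X Y * offDiag X Y).eigenspace μ) =
      finrank 𝕂 (End.eigenspace (Y ∘ₗ X) μ) + finrank 𝕂 (End.eigenspace (X ∘ₗ Y) μ) := by
  rw [eigenspace_offDiag_sq, finrank_submodule_prod]

lemma finrank_eigenspace_comp_eq_of_offDiag_sq [FiniteDimensional 𝕂 A] [FiniteDimensional 𝕂 B]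
    {X X' : A →ₗ[𝕂] B} {Y Y' : B →ₗ[𝕂] A}
    (hker : Disjoint (LinearMap.ker (offDiag X Y)) (LinearMap.range (offDiag X Y)))
    (hker' : Disjoint (LinearMap.ker (offDiag X' Y')) (LinearMap.range (offDiag X' Y')))
    (hdim : ∀ μ, finrank 𝕂 ((offDiag X Y * offDiag X Y).eigenspace μ) =
      finrank 𝕂 ((offDiag X' Y' * offDiag X' Y').eigenspace μ)) (μ : 𝕂) :
    finrank 𝕂 (End.eigenspace (Y ∘ₗ X) μ) = finrank 𝕂 (End.eigenspace (Y' ∘ₗ X') μ) ∧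
      finrank 𝕂 (End.eigenspace (X ∘ₗ Y) μ) = finrank 𝕂 (End.eigenspace (X' ∘ₗ Y') μ) := by
  have sum_eq := hdim μ
  rw [finrank_eigenspace_offDiag_sq, finrank_eigenspace_offDiag_sq] at sum_eq
  rcases eq_or_ne μ 0 with rfl | hμ
  · have diff := finrank_eigenspace_comp_zero_add (disjoint_ker_range_of_offDiag hker).1
      (disjoint_ker_range_of_offDiag hker).2
    have diff' := finrank_eigenspace_comp_zero_add (disjoint_ker_range_of_offDiag hker').1
      (disjoint_ker_range_of_offDiag hker').2
    omega
  · have comm := finrank_eigenspace_comp_comm X Y hμ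
    have comm' := finrank_eigenspace_comp_comm X' Y' hμ
    omega

theorem exists_prodCongr_semiconj_offDiag [FiniteDimensional 𝕂 A] [FiniteDimensional 𝕂 B]
    {X X' : A →ₗ[𝕂] B} {Y Y' : B →ₗ[𝕂] A}
    (hdiag : IsDiagonalizable (offDiag X Y * offDiag X Y))
    (hker : Disjoint (LinearMap.ker (offDiag X Y)) (LinearMap.range (offDiag X Y)))
    {g : (A × B) ≃ₗ[𝕂] A × B} (hg : Function.Semiconj g (offDiag X Y) (offDiag X' Y')) :
    ∃ (u : A ≃ₗ[𝕂] A) (w : B ≃ₗ[𝕂] B),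
      Function.Semiconj (u.prodCongr w) (offDiag X Y) (offDiag X' Y') := by
  have hker' := disjoint_ker_range_of_semiconj hg hker
  have hdim := finrank_eigenspace_comp_eq_of_offDiag_sq hker hker' fun μ =>
    finrank_eigenspace_eq_of_semiconj (e := g) (f := offDiag X Y * offDiag X Y)
      (f' := offDiag X' Y' * offDiag X' Y') (hg.comp_right hg) μ
  obtain ⟨hdiagA, hdiagB⟩ := isDiagonalizable_comp_of_offDiag_sq hdiag
  obtain ⟨hYX, hXY⟩ := disjoint_ker_range_of_offDiag hker
  obtain ⟨hYX', hXY'⟩ := disjoint_ker_range_of_offDiag hker'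
  obtain ⟨u, w, hX, hY⟩ := exists_linearEquiv_pair_of_finrank_eigenspace_eq hdiagA hdiagB
    hYX hXY hYX' hXY' (fun μ => (hdim μ).1) (hdim 0).2
  exact ⟨u, w, fun v => Prod.ext (hY v.2) (hX v.1)⟩

end Pairs

theorem exists_linearEquiv_semiconj_of_isCompl {𝕂 V : Type*} [Field 𝕂] [AddCommGroup V]
    [Module 𝕂 V] [FiniteDimensional 𝕂 V] {Va Vb : Submodule 𝕂 V} (hVab : IsCompl Va Vb)
    {s s' : End 𝕂 V} (ha : ∀ v ∈ Va, s v ∈ Vb) (hb : ∀ v ∈ Vb, s v ∈ Va)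
    (ha' : ∀ v ∈ Va, s' v ∈ Vb) (hb' : ∀ v ∈ Vb, s' v ∈ Va)
    (hdiag : IsDiagonalizable (s * s))
    (hker : Disjoint (LinearMap.ker s) (LinearMap.range s))
    {g : V ≃ₗ[𝕂] V} (hg : Function.Semiconj g s s') :
    ∃ k : V ≃ₗ[𝕂] V, Va.map k.toLinearMap = Va ∧ Vb.map k.toLinearMap = Vb ∧
      Function.Semiconj k s s' := by
  let e := Va.prodEquivOfIsCompl Vb hVab
  have he := semiconj_prodEquivOfIsCompl_offDiag hVab ha hb
  have he_symm := he.inverse_left e.left_inv e.right_inv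
  have he' := semiconj_prodEquivOfIsCompl_offDiag hVab ha' hb'
  have he_symm' := he'.inverse_left e.left_inv e.right_inv
  obtain ⟨u, w, huw⟩ := exists_prodCongr_semiconj_offDiag
    (hdiag.of_semiconj (φ := e.symm.toLinearMap) (he_symm.comp_right he_symm) e.symm.surjective)
    (disjoint_ker_range_of_semiconj (e := e.symm) he_symm hker)
    (g := e ≪≫ₗ g ≪≫ₗ e.symm) ((he_symm'.comp_left hg).comp_left he)
  refine ⟨e.symm ≪≫ₗ u.prodCongr w ≪≫ₗ e, submodule_map_eq_self_of_apply_eq (u := u) fun a => ?_,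
    submodule_map_eq_self_of_apply_eq (u := w) fun b => ?_, (he'.comp_left huw).comp_left he_symm⟩
  · simp [e]
  · simp [e]

end SymmetricPairAIII

theorem semisimple_orbit_inter_p_typeAIII_general {𝕂 V : Type*} [Field 𝕂] [AddCommGroup V]
    [Module 𝕂 V] [FiniteDimensional 𝕂 V] {Va Vb : Submodule 𝕂 V} (hVab : IsCompl Va Vb)
    {s s' : Module.End 𝕂 V} (hs : Va.map s ≤ Vb ∧ Vb.map s ≤ Va)
    (hs' : Va.map s' ≤ Vb ∧ Vb.map s' ≤ Va) (hdiag : IsDiagonalizable (s * s))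
    (hker : Disjoint (LinearMap.ker s) (LinearMap.range s))
    {g : (Module.End 𝕂 V)ˣ} (hg : s' = g * s * ↑g⁻¹) :
    ∃ k : (Module.End 𝕂 V)ˣ, (Va.map (k : Module.End 𝕂 V) = Va ∧
      Vb.map (k : Module.End 𝕂 V) = Vb) ∧ s' = k * s * ↑k⁻¹ := by
  simp only [Submodule.map_le_iff_le_comap] at hs hs'
  rw [Units.eq_mul_inv_iff_mul_eq] at hg
  obtain ⟨k, hka, hkb, hk⟩ := exists_linearEquiv_semiconj_of_isCompl hVab hs.1 hs.2 hs'.1 hs'.2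
    hdiag hker (g := LinearMap.GeneralLinearGroup.toLinearEquiv g)
    fun v => (LinearMap.congr_fun hg v).symm
  refine ⟨LinearMap.GeneralLinearGroup.ofLinearEquiv k, ⟨hka, hkb⟩, ?_⟩
  rw [Units.eq_mul_inv_iff_mul_eq]
  exact LinearMap.ext fun v => (hk v).symm

theorem semisimple_orbit_inter_p_typeAIII {𝕂 : Type*} [Field 𝕂] [IsAlgClosed 𝕂] [CharZero 𝕂]
    {N : ℕ} (Va Vb : Submodule 𝕂 (Fin N → 𝕂)) (hVab : IsCompl Va Vb)
    (s s' : EndV 𝕂 N)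
    (hs : s ∈ pAIII Va Vb) (hs' : s' ∈ pAIII Va Vb)
    (hss : IsSemisimpleE s) (hss' : IsSemisimpleE s')
    (g : (EndV 𝕂 N)ˣ) (hg : s' = conjAct g s) :
    ∃ k ∈ KAIII Va Vb, s' = conjAct k s :=
  semisimple_orbit_inter_p_typeAIII_general hVab hs hs'
    (isSemisimpleE_iff_isDiagonalizable.mp hss).mul_self
    (isSemisimpleE_iff_isDiagonalizable.mp hss).disjoint_ker_range hg
end

section
/- (Ohta's conjugacy transfer theorem.) Let κ be a 𝕂-algebra automorphism of the associative algebra gl_N(𝕂) with κ∘κ = id, and let x ↦ x* be a 𝕂-linear anti-automorphism of gl_N(𝕂) (so (xy)* = y*x* and (x*)* = x) which commutes with κ. Set G′ := {g ∈ gl_N(𝕂) invertible : κ(g) = g} and G″ := {g ∈ G′ : g* = g⁻¹}, and σ(x) := −x*. Fix η, η′ ∈ {+1, −1}. Then two elements x, y ∈ gl_N(𝕂) satisfying σ(x) = ηx, κ(x) = η′x, σ(y) = ηy, κ(y) = η′y are conjugate under G″ if and only if they are conjugate under G′. -/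
/-!
If `g` conjugates `x` to `y` and `x`, `y` are eigenvectors of `*` for the same eigenvalue, then `g*`
conjugates `y` back to `x`, so `h = g* g` commutes with `x`. Over an algebraically closed field of
characteristic other than two, the unit `h` has a square root `s` which is a polynomial in `h`:
interpolating square roots of its eigenvalues gives one modulo nilpotents, which Newton iteration
makes exact. Hence `s` is self-adjoint and commutes with `x`, and in the polar decomposition
`g = u s` the factor `u` satisfies `u* = u⁻¹` and still conjugates `x` to `y`. Since `s⁻¹` is a
polynomial in `h` too, `u = g s⁻¹` lies in every `*`-stable subalgebra containing `g`, in particular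
in the fixed algebra of `κ`.
-/

section Roots

open Polynomial

variable {K A : Type*} [Field K]

theorem dvd_pow_card_roots_of_splits {f g : K[X]} (hf : f.Splits) (hf0 : f ≠ 0)
    (hg : ∀ a ∈ f.roots, g.eval a = 0) : f ∣ g ^ f.roots.card := by
  have hprod : (f.roots.map fun a ↦ X - C a).prod ∣ (f.roots.map fun _ ↦ g).prod :=
    Multiset.prod_dvd_prod_of_dvd _ _ fun a ha ↦ dvd_iff_isRoot.2 (hg a ha)
  rw [Multiset.map_const', Multiset.prod_replicate] at hprod
  have hlead : IsUnit (C f.leadingCoeff) := isUnit_C.2 (leadingCoeff_ne_zero.2 hf0).isUnit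
  nth_rw 1 [hf.eq_prod_roots]
  exact hlead.mul_left_dvd.2 hprod

theorem isNilpotent_aeval_of_forall_mem_roots_minpoly [Ring A] [Algebra K A] {a : A}
    (ha : IsIntegral K a) (hsplits : (minpoly K a).Splits) {g : K[X]}
    (hg : ∀ r ∈ (minpoly K a).roots, g.eval r = 0) : IsNilpotent (aeval a g) := by
  refine ⟨(minpoly K a).roots.card, ?_⟩
  rw [← map_pow, ← minpoly.dvd_iff]
  exact dvd_pow_card_roots_of_splits hsplits (minpoly.ne_zero ha) hg

theorem exists_isNilpotent_pow_aeval_sub [IsAlgClosed K] [Ring A] [Algebra K A] {a : A}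
    (ha : IsIntegral K a) {n : ℕ} (hn : 0 < n) : ∃ q : K[X], IsNilpotent (aeval a q ^ n - a) := by
  classical
  choose root hroot using fun r : K ↦ IsAlgClosed.exists_pow_nat_eq r hn
  let q := Lagrange.interpolate (minpoly K a).roots.toFinset id root
  have hq (r : K) (hr : r ∈ (minpoly K a).roots) : (q ^ n - X).eval r = 0 := by
    have hqr : q.eval r = root r :=
      Lagrange.eval_interpolate_at_node root Function.injective_id.injOn
        (Multiset.mem_toFinset.2 hr)
    rw [eval_sub, eval_pow, eval_X, hqr, hroot, sub_self]
  refine ⟨q, ?_⟩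
  simpa using isNilpotent_aeval_of_forall_mem_roots_minpoly ha (IsAlgClosed.splits _) hq

theorem exists_pow_eq_of_isNilpotent_pow_sub {R : Type*} [CommRing R] {a b : R} {n : ℕ}
    (hn : IsUnit (n : R)) (ha : IsUnit a) (h : IsNilpotent (b ^ n - a)) : ∃ c, c ^ n = a := by
  rcases eq_or_ne n 0 with rfl | hn0
  · have : Subsingleton R := subsingleton_of_zero_eq_one (by simpa [eq_comm] using hn)
    exact ⟨0, Subsingleton.elim _ _⟩
  have hb : IsUnit b := by
    have hbn := h.isUnit_add_left_of_commute ha (Commute.all _ _)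
    rwa [add_sub_cancel, isUnit_pow_iff hn0] at hbn
  obtain ⟨c, ⟨-, hc⟩, -⟩ := existsUnique_nilpotent_sub_and_aeval_eq_zero
    (P := (X ^ n - C a : R[X])) (x := b) (by simpa using h)
    (by simpa [derivative_X_pow] using And.intro hn (hb.pow (n - 1)))
  exact ⟨c, by simpa [sub_eq_zero] using hc⟩

theorem exists_pow_eq_of_isUnit_of_isIntegral {R : Type*} [IsAlgClosed K] [CommRing R] [Algebra K R]
    {a : R} (ha : IsUnit a) (hint : IsIntegral K a) {n : ℕ} (hn : (n : K) ≠ 0) :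
    ∃ b, b ^ n = a := by
  have hn_pos : 0 < n := Nat.pos_of_ne_zero fun h ↦ hn (by simp [h])
  have hn_unit : IsUnit (n : R) := by simpa using hn.isUnit.map (algebraMap K R)
  obtain ⟨q, hq⟩ := exists_isNilpotent_pow_aeval_sub hint hn_pos
  exact exists_pow_eq_of_isNilpotent_pow_sub hn_unit ha hq

variable [Ring A] [Algebra K A]

theorem isUnit_mk_self_adjoin_singleton {a : A} (ha : IsUnit a) (hint : IsIntegral K a) :
    IsUnit (⟨a, Algebra.self_mem_adjoin_singleton K a⟩ : Algebra.adjoin K {a}) :=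
  IsArtinianRing.isUnit_of_isIntegral_of_nonZeroDivisor (R := K)
    ((isIntegral_algHom_iff (Algebra.adjoin K {a}).val Subtype.val_injective).1 hint)
    (comap_nonZeroDivisors_le_of_injective (f := (Algebra.adjoin K {a}).val)
      Subtype.val_injective ha.mem_nonZeroDivisors)

theorem exists_units_mem_adjoin_pow_eq [IsAlgClosed K] (a : Aˣ) (hint : IsIntegral K (a : A))
    {n : ℕ} (hn : (n : K) ≠ 0) :
    ∃ s : Aˣ, s ^ n = a ∧
      (s : A) ∈ Algebra.adjoin K {(a : A)} ∧ (↑s⁻¹ : A) ∈ Algebra.adjoin K {(a : A)} := by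
  have hunit := isUnit_mk_self_adjoin_singleton a.isUnit hint
  obtain ⟨b, hb⟩ := exists_pow_eq_of_isUnit_of_isIntegral hunit
    ((isIntegral_algHom_iff (Algebra.adjoin K {(a : A)}).val Subtype.val_injective).1 hint) hn
  have hb_unit : IsUnit b :=
    (isUnit_pow_iff (by rintro rfl; simp at hn)).1 (hb ▸ hunit)
  let s : Aˣ := Units.map (Algebra.adjoin K {(a : A)}).val.toMonoidHom hb_unit.unit
  exact ⟨s, Units.ext (congrArg Subtype.val hb), b.2,
    (↑hb_unit.unit⁻¹ : Algebra.adjoin K {(a : A)}).2⟩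

end Roots

theorem isSelfAdjoint_of_mem_adjoin_singleton {R A : Type*} [CommSemiring R] [StarRing R]
    [TrivialStar R] [Semiring A] [StarRing A] [Algebra R A] [StarModule R A] {a b : A}
    (ha : IsSelfAdjoint a) (hb : b ∈ Algebra.adjoin R {a}) : IsSelfAdjoint b := by
  induction hb using Algebra.adjoin_induction with
  | mem b hb => rwa [Set.mem_singleton_iff.1 hb]
  | algebraMap r => exact (IsSelfAdjoint.all r).algebraMap A
  | add b c _ _ hb hc => exact hb.add hc
  | mul b c hb_mem hc_mem hb hc =>
    have hab := Algebra.commute_of_mem_adjoin_self hb_mem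
    exact (hb.commute_iff hc).1
      (Algebra.commute_of_mem_adjoin_singleton_of_commute hc_mem hab.symm)

theorem commute_star_mul_self_of_semiconjBy {K A : Type*} [Field K] [Ring A] [StarRing A]
    [Algebra K A] {c : K} {g x y : A} (hx : star x = c • x) (hy : star y = c • y)
    (h : SemiconjBy g x y) : Commute (star g * g) x := by
  suffices hstar : SemiconjBy (star g) y x from hstar.mul_left h
  rcases eq_or_ne c 0 with rfl | hc
  · rw [zero_smul, star_eq_zero] at hx hy
    simp [hx, hy]
  · have hsmul := h.star_star_star
    rw [hx, hy, SemiconjBy, mul_smul_comm, smul_mul_assoc] at hsmul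
    exact smul_right_injective A hc hsmul

section StarAlgebra

variable {K A : Type*} [Field K] [IsAlgClosed K] [NeZero (2 : K)] [StarRing K] [TrivialStar K]
  [Ring A] [StarRing A] [Algebra K A] [StarModule K A]

theorem exists_polar_decomposition (g : Aˣ) (hint : IsIntegral K (star g * g : A)) :
    ∃ u s : Aˣ, g = u * s ∧ star u = u⁻¹ ∧
      (s : A) ∈ Algebra.adjoin K {(star g * g : A)} ∧
      (↑s⁻¹ : A) ∈ Algebra.adjoin K {(star g * g : A)} := by
  obtain ⟨s, hs, hs_mem, hs_inv_mem⟩ :=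
    exists_units_mem_adjoin_pow_eq (star g * g) hint (n := 2) (by exact_mod_cast two_ne_zero)
  have hs_star : star s⁻¹ = s⁻¹ := Units.ext <|
    isSelfAdjoint_of_mem_adjoin_singleton (R := K) (IsSelfAdjoint.star_mul_self (g : A)) hs_inv_mem
  refine ⟨g * s⁻¹, s, (inv_mul_cancel_right g s).symm, ?_, hs_mem, hs_inv_mem⟩
  refine eq_inv_of_mul_eq_one_left ?_
  calc star (g * s⁻¹) * (g * s⁻¹) = s⁻¹ * (star g * g) * s⁻¹ := by
        rw [star_mul, hs_star]; group
    _ = 1 := by rw [← hs]; group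

theorem exists_star_eq_inv_semiconjBy_of_semiconjBy (B : StarSubalgebra K A) {c : K} {x y : A}
    (hx : star x = c • x) (hy : star y = c • y) (g : Aˣ) (hint : IsIntegral K (star g * g : A))
    (hgB : (g : A) ∈ B) (hg : SemiconjBy (g : A) x y) :
    ∃ u : Aˣ, (u : A) ∈ B ∧ star u = u⁻¹ ∧ SemiconjBy (u : A) x y := by
  obtain ⟨u, s, hgus, hu, hs_mem, hs_inv_mem⟩ := exists_polar_decomposition (K := K) g hint
  have hu_eq : (u : A) = g * ↑s⁻¹ :=
    (Units.eq_mul_inv_iff_mul_eq s).2 (congrArg Units.val hgus).symm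
  have hs_inv_B : (↑s⁻¹ : A) ∈ B :=
    Algebra.adjoin_le (S := B.toSubalgebra)
      (Set.singleton_subset_iff.2 (mul_mem (star_mem hgB : star (g : A) ∈ B) hgB)) hs_inv_mem
  have hs_commute : Commute (s : A) x :=
    (Algebra.commute_of_mem_adjoin_singleton_of_commute hs_mem
      (commute_star_mul_self_of_semiconjBy hx hy hg).symm).symm
  refine ⟨u, ?_, hu, ?_⟩ <;> rw [hu_eq]
  · exact mul_mem hgB hs_inv_B
  · exact hg.mul_left hs_commute.units_inv_left

end StarAlgebra

theorem ohta_conjugacy_transfer_general {K A : Type*} [Field K] [IsAlgClosed K] [NeZero (2 : K)]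
    [Ring A] [Algebra K A] (B : Subalgebra K A) [Algebra.IsIntegral K B] (st : A →ₗ[K] A)
    (hst_mul : ∀ a b, st (a * b) = st b * st a) (hst_invol : ∀ a, st (st a) = a)
    (hst_mem : ∀ b ∈ B, st b ∈ B) {c : K} {x y : A} (hx : st x = c • x) (hy : st y = c • y) :
    (∃ g : Aˣ, (g : A) ∈ B ∧ st g = ↑g⁻¹ ∧ y = g * x * ↑g⁻¹) ↔
      ∃ g : Aˣ, (g : A) ∈ B ∧ y = g * x * ↑g⁻¹ := by
  let : StarRing K := starRingOfComm
  have : TrivialStar K := ⟨fun _ ↦ rfl⟩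
  let : StarRing A :=
    { star := st, star_involutive := hst_invol, star_mul := hst_mul, star_add := map_add st }
  have : StarModule K A := ⟨map_smul st⟩
  let B_star : StarSubalgebra K A := { B with star_mem' := hst_mem _ }
  refine ⟨fun ⟨g, hgB, _, hgy⟩ ↦ ⟨g, hgB, hgy⟩, fun ⟨g, hgB, hgy⟩ ↦ ?_⟩
  have hint : IsIntegral K (star g * g : A) :=
    (Algebra.IsIntegral.isIntegral (⟨star g * g, mul_mem (hst_mem g hgB) hgB⟩ : B)).map B.val
  obtain ⟨u, huB, hu_star, hu⟩ := exists_star_eq_inv_semiconjBy_of_semiconjBy B_star hx hy g hint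
    hgB ((Units.eq_mul_inv_iff_mul_eq g).1 hgy).symm
  exact ⟨u, huB, congrArg Units.val hu_star, (Units.eq_mul_inv_iff_mul_eq u).2 hu.eq.symm⟩

/-! Ohta's conjugacy transfer theorem: conjugacy under `G″` agrees with conjugacy
under `G′` on the simultaneous eigenspaces of `σ` and `κ`. -/

theorem ohta_conjugacy_transfer {𝕂 : Type*} [Field 𝕂] [IsAlgClosed 𝕂] [CharZero 𝕂] {N : ℕ}
    (κ : Matrix (Fin N) (Fin N) 𝕂 ≃ₐ[𝕂] Matrix (Fin N) (Fin N) 𝕂)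
    (hκ : ∀ x : Matrix (Fin N) (Fin N) 𝕂, κ (κ x) = x)
    (st : Matrix (Fin N) (Fin N) 𝕂 →ₗ[𝕂] Matrix (Fin N) (Fin N) 𝕂)
    (hst_mul : ∀ x y : Matrix (Fin N) (Fin N) 𝕂, st (x * y) = st y * st x)
    (hst_invol : ∀ x : Matrix (Fin N) (Fin N) 𝕂, st (st x) = x)
    (hcomm : ∀ x : Matrix (Fin N) (Fin N) 𝕂, κ (st x) = st (κ x))
    (η η' : 𝕂) (hη : η = 1 ∨ η = -1) (hη' : η' = 1 ∨ η' = -1)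
    (x y : Matrix (Fin N) (Fin N) 𝕂)
    (hxσ : -st x = η • x) (hxκ : κ x = η' • x)
    (hyσ : -st y = η • y) (hyκ : κ y = η' • y) :
    (∃ g : (Matrix (Fin N) (Fin N) 𝕂)ˣ,
        κ (g : Matrix (Fin N) (Fin N) 𝕂) = (g : Matrix (Fin N) (Fin N) 𝕂) ∧
        st (g : Matrix (Fin N) (Fin N) 𝕂) = ((g⁻¹ : (Matrix (Fin N) (Fin N) 𝕂)ˣ) : Matrix (Fin N) (Fin N) 𝕂) ∧
        y = (g : Matrix (Fin N) (Fin N) 𝕂) * x * ((g⁻¹ : (Matrix (Fin N) (Fin N) 𝕂)ˣ) : Matrix (Fin N) (Fin N) 𝕂)) ↔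
    (∃ g : (Matrix (Fin N) (Fin N) 𝕂)ˣ,
        κ (g : Matrix (Fin N) (Fin N) 𝕂) = (g : Matrix (Fin N) (Fin N) 𝕂) ∧
        y = (g : Matrix (Fin N) (Fin N) 𝕂) * x * ((g⁻¹ : (Matrix (Fin N) (Fin N) 𝕂)ˣ) : Matrix (Fin N) (Fin N) 𝕂)) := by
  exact ohta_conjugacy_transfer_general (AlgHom.equalizer κ.toAlgHom (.id 𝕂 _)) st hst_mul
    hst_invol (fun b (hb : κ b = b) ↦ (hcomm b).trans (congrArg st hb)) (c := -η)
    (by rw [neg_smul, ← hxσ, neg_neg]) (by rw [neg_smul, ← hyσ, neg_neg])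
end
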